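/- Let ℓ ≥ 2 and m ≥ 1. Then DET_ℓ(ω, m) = RR_ℓ(ω, m)/RR_1(ω, m) equals 1 if and only if there exists k ∈ ℕ such that either 2^k ≤ m < m + ℓ − 1 < 2^k + 2^{k−1}, or 2^k + 2^{k−1} ≤ m < m + ℓ − 1 < 2^{k+1}; otherwise DET_ℓ(ω, m) < 1. -/

import Mathlib

/-!
The proof computes the limit `c m` of `corrSum n m` from the self-similarity of the sequence:
`ω_{2i+1} = 0` and `ω_{2i} = 1 - ω_i`. Splitting the pairs `(i, j)` by parity, the pairs
`(2a, 2b)` and `(2a+1, 2b+1)` that agree for `m` steps correspond to the pairs `(a, b)` that agree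
for `⌊m/2⌋`, respectively `⌈m/2⌉`, steps, while pairs of opposite parity never agree for three
steps, because `11` does not occur in `ω`. Hence `4 c m = c ⌊m/2⌋ + c ⌈m/2⌉` for `m ≥ 3`
(`pairCount_two_mul`, `corrSum_tendsto`). The symbol `1` has frequency `1/3`, which gives
`c 1 = 5/9` and `c 2 = 1/3`.

The differences `D m = c m - c (m+1)` then satisfy `D m = D ⌊m/2⌋ / 4` for `m ≥ 3`, with
`D 1 = 2/9` and `D 2 = 1/9`. So `D` is antitone on `m ≥ 1`, it is constant exactly on the blocks
`[2^k, 2^k + 2^(k-1))` and `[2^k + 2^(k-1), 2^(k+1))` (`corrDiff_eq_iff`), and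
`RR_1 - RR_ℓ = ∑_{m ≤ j < m+ℓ-1} (D j - D (m+ℓ-1))` is a sum of nonnegative terms which vanishes
exactly when `m` and `m+ℓ-1` lie in the same block.
-/

open Filter Topology

/-- The period-doubling sequence (1-based): `pd i = k_i mod 2` where `k_i` is the
largest `k` such that `2^k` divides `i`. -/
def pd (i : ℕ) : ℕ := padicValNat 2 i % 2

/-- The `m`-word `w_i^(m) = ω_i ω_{i+1} ⋯ ω_{i+m-1}` of the period-doubling sequence. -/
def wordAt (i m : ℕ) : List ℕ := (List.range m).map (fun h => pd (i + h))

/-- An `m`-word is allowed if it occurs in the period-doubling sequence. -/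
def Allowed (m : ℕ) (v : List ℕ) : Prop := ∃ i, 1 ≤ i ∧ wordAt i m = v

/-- The complexity function of the period-doubling sequence. -/
noncomputable def pdComplexity (m : ℕ) : ℕ := Set.ncard {v | Allowed m v}

/-- `HasFreq m v c`: the frequency of the `m`-word `v` in the period-doubling
sequence exists and equals `c`. -/
def HasFreq (m : ℕ) (v : List ℕ) (c : ℝ) : Prop :=
  Tendsto (fun n : ℕ => (((Finset.Icc 1 n).filter (fun i => wordAt i m = v)).card : ℝ) / n)
    atTop (𝓝 c)

open Classical in
/-- The correlation sum `C(ω, n, m)` of the period-doubling sequence, for a distance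
threshold `ε` with `2^{-m} ≤ ε < 2^{-m+1}`. -/
noncomputable def corrSum (n m : ℕ) : ℝ :=
  (((Finset.range n ×ˢ Finset.range n).filter
      (fun p : ℕ × ℕ => ∀ h ∈ Finset.Icc 1 m, pd (p.1 + h) = pd (p.2 + h))).card : ℝ) / (n : ℝ) ^ 2

/-- The period-doubling substitution `ζ(0) = 01`, `ζ(1) = 00`, extended to a morphism
on finite words. -/
def substWord (w : List ℕ) : List ℕ := (w.map (fun a => if a = 0 then [0, 1] else [0, 0])).flatten

/-- The period-doubling substitution acting on one-sided infinite sequences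
(0-based indexing). -/
def substSeq (x : ℕ → ℕ) : ℕ → ℕ := fun n =>
  if n % 2 = 0 then 0 else if x (n / 2) = 0 then 1 else 0

/-! ### Self-similarity of the sequence and of agreeing pairs -/

lemma pd_odd (a : ℕ) : pd (2 * a + 1) = 0 := by
  have : ¬ 2 ∣ 2 * a + 1 := by omega
  simp [pd, padicValNat.eq_zero_of_not_dvd this]

lemma pd_even (a : ℕ) (ha : 1 ≤ a) : pd (2 * a) = 1 - pd a := by
  have h : padicValNat 2 (2 * a) = 1 + padicValNat 2 a := by
    rw [padicValNat.mul (by norm_num) (by omega), padicValNat.self (by norm_num)]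
  unfold pd
  rw [h]
  omega

lemma pd_le_one (a : ℕ) : pd a ≤ 1 := by
  unfold pd
  omega

/-- The words of length `m` following positions `i` and `j` coincide. -/
def Agree (m i j : ℕ) : Prop := ∀ h ∈ Finset.Icc 1 m, pd (i + h) = pd (j + h)

lemma agree_comm (m i j : ℕ) : Agree m i j ↔ Agree m j i :=
  ⟨fun H h hh => (H h hh).symm, fun H h hh => (H h hh).symm⟩

lemma agree_even_even (m a b : ℕ) : Agree m (2 * a) (2 * b) ↔ Agree (m / 2) a b := by
  constructor
  · intro H h hh
    rw [Finset.mem_Icc] at hh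
    have := H (2 * h) (Finset.mem_Icc.2 (by omega))
    rw [← mul_add, ← mul_add, pd_even _ (by omega), pd_even _ (by omega)] at this
    have := pd_le_one (a + h)
    have := pd_le_one (b + h)
    omega
  · intro H h hh
    rw [Finset.mem_Icc] at hh
    obtain ⟨t, rfl | rfl⟩ := Nat.even_or_odd' h
    · have := H t (Finset.mem_Icc.2 (by omega))
      rw [← mul_add, ← mul_add, pd_even _ (by omega), pd_even _ (by omega), this]
    · rw [show 2 * a + (2 * t + 1) = 2 * (a + t) + 1 by ring,
        show 2 * b + (2 * t + 1) = 2 * (b + t) + 1 by ring, pd_odd, pd_odd]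

lemma agree_odd_odd (m a b : ℕ) :
    Agree m (2 * a + 1) (2 * b + 1) ↔ Agree ((m + 1) / 2) a b := by
  constructor
  · intro H h hh
    rw [Finset.mem_Icc] at hh
    have := H (2 * h - 1) (Finset.mem_Icc.2 (by omega))
    rw [show 2 * a + 1 + (2 * h - 1) = 2 * (a + h) by omega,
      show 2 * b + 1 + (2 * h - 1) = 2 * (b + h) by omega,
      pd_even _ (by omega), pd_even _ (by omega)] at this
    have := pd_le_one (a + h)
    have := pd_le_one (b + h)
    omega
  · intro H h hh
    rw [Finset.mem_Icc] at hh
    obtain ⟨t, rfl | rfl⟩ := Nat.even_or_odd' h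
    · rw [show 2 * a + 1 + 2 * t = 2 * (a + t) + 1 by ring,
        show 2 * b + 1 + 2 * t = 2 * (b + t) + 1 by ring, pd_odd, pd_odd]
    · have := H (t + 1) (Finset.mem_Icc.2 (by omega))
      rw [show 2 * a + 1 + (2 * t + 1) = 2 * (a + (t + 1)) by ring,
        show 2 * b + 1 + (2 * t + 1) = 2 * (b + (t + 1)) by ring,
        pd_even _ (by omega), pd_even _ (by omega), this]

lemma agree_two_even_odd (a b : ℕ) :
    Agree 2 (2 * a) (2 * b + 1) ↔ pd (a + 1) = 1 ∧ pd (b + 1) = 1 := by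
  have h1 := pd_odd a
  have h2 := pd_odd (b + 1)
  have h3 := pd_even (a + 1) (by omega)
  have h4 := pd_even (b + 1) (by omega)
  have h5 := pd_le_one (a + 1)
  have h6 := pd_le_one (b + 1)
  have key : Agree 2 (2 * a) (2 * b + 1) ↔
      pd (2 * a + 1) = pd (2 * (b + 1)) ∧ pd (2 * (a + 1)) = pd (2 * (b + 1) + 1) := by
    constructor
    · intro H
      exact ⟨H 1 (by simp), H 2 (by simp)⟩
    · rintro ⟨H1, H2⟩ h hh
      rw [Finset.mem_Icc] at hh
      obtain rfl | rfl : h = 1 ∨ h = 2 := by omega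
      · exact H1
      · exact H2
  rw [key, h1, h2, h3, h4]
  omega

/-- Agreement over three steps at positions of opposite parity would force `11` in `ω`. -/
lemma not_agree_even_odd (m a b : ℕ) (hm : 3 ≤ m) : ¬ Agree m (2 * a) (2 * b + 1) := by
  intro H
  have e1 : pd (2 * a + 1) = pd (2 * (b + 1)) := H 1 (Finset.mem_Icc.2 (by omega))
  have e3 : pd (2 * (a + 1) + 1) = pd (2 * (b + 2)) := H 3 (Finset.mem_Icc.2 (by omega))
  rw [pd_odd, pd_even _ (by omega)] at e1 e3
  obtain ⟨t, rfl | rfl⟩ := Nat.even_or_odd' b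
  · have := pd_odd t
    omega
  · have := pd_odd (t + 1)
    rw [show 2 * (t + 1) + 1 = 2 * t + 1 + 2 by ring] at this
    omega

/-! ### Counting agreeing pairs -/

open Classical in
/-- The indicator function of `Agree m`. -/
noncomputable def agreeInd (m i j : ℕ) : ℝ := if Agree m i j then 1 else 0

/-- The number of pairs `(i, j)` with `i, j < n` that agree for `m` steps. -/
noncomputable def pairCount (n m : ℕ) : ℝ :=
  ∑ i ∈ Finset.range n, ∑ j ∈ Finset.range n, agreeInd m i j

/-- The number of occurrences of the symbol `1` among `ω₁, …, ω_n`. -/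
def ones (n : ℕ) : ℕ := ∑ i ∈ Finset.range n, pd (i + 1)

lemma corrSum_eq (n m : ℕ) : corrSum n m = pairCount n m / (n : ℝ) ^ 2 := by
  unfold corrSum pairCount agreeInd Agree
  rw [← Finset.sum_product', Finset.card_filter]
  push_cast
  congr! 3

lemma agreeInd_nonneg (m i j : ℕ) : 0 ≤ agreeInd m i j := by
  unfold agreeInd
  split_ifs <;> norm_num

lemma pairCount_mono (m : ℕ) : Monotone (fun n => pairCount n m) := by
  intro n n' h
  have hs : Finset.range n ⊆ Finset.range n' := Finset.range_subset_range.2 h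
  calc pairCount n m ≤ ∑ i ∈ Finset.range n, ∑ j ∈ Finset.range n', agreeInd m i j :=
        Finset.sum_le_sum fun i _ =>
          Finset.sum_le_sum_of_subset_of_nonneg hs fun j _ _ => agreeInd_nonneg m i j
    _ ≤ pairCount n' m :=
        Finset.sum_le_sum_of_subset_of_nonneg hs fun i _ _ =>
          Finset.sum_nonneg fun j _ => agreeInd_nonneg m i j

lemma sum_range_two_mul {M : Type*} [AddCommMonoid M] (f : ℕ → M) (n : ℕ) :
    ∑ i ∈ Finset.range (2 * n), f i = ∑ a ∈ Finset.range n, (f (2 * a) + f (2 * a + 1)) := by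
  induction n with
  | zero => simp
  | succ n ih =>
    rw [show 2 * (n + 1) = 2 * n + 1 + 1 by ring, Finset.sum_range_succ, Finset.sum_range_succ, ih,
      Finset.sum_range_succ, add_assoc]

lemma pairCount_split (n m : ℕ) : pairCount (2 * n) m =
    pairCount n (m / 2) + pairCount n ((m + 1) / 2) +
      2 * ∑ a ∈ Finset.range n, ∑ b ∈ Finset.range n, agreeInd m (2 * a) (2 * b + 1) := by
  have hee (a b : ℕ) : agreeInd m (2 * a) (2 * b) = agreeInd (m / 2) a b := by
    unfold agreeInd
    rw [agree_even_even]
  have hoo (a b : ℕ) : agreeInd m (2 * a + 1) (2 * b + 1) = agreeInd ((m + 1) / 2) a b := by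
    unfold agreeInd
    rw [agree_odd_odd]
  have hoe (a b : ℕ) : agreeInd m (2 * a + 1) (2 * b) = agreeInd m (2 * b) (2 * a + 1) := by
    unfold agreeInd
    rw [agree_comm m (2 * a + 1)]
  have hswap : ∑ a ∈ Finset.range n, ∑ b ∈ Finset.range n, agreeInd m (2 * b) (2 * a + 1) =
      ∑ a ∈ Finset.range n, ∑ b ∈ Finset.range n, agreeInd m (2 * a) (2 * b + 1) :=
    Finset.sum_comm
  unfold pairCount
  simp only [sum_range_two_mul, Finset.sum_add_distrib, hee, hoo, hoe]
  rw [hswap]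
  ring

lemma pairCount_two_mul (n m : ℕ) (hm : 3 ≤ m) :
    pairCount (2 * n) m = pairCount n (m / 2) + pairCount n ((m + 1) / 2) := by
  rw [pairCount_split]
  simp [agreeInd, not_agree_even_odd m _ _ hm]

lemma pairCount_one (n : ℕ) :
    pairCount n 1 = (ones n : ℝ) ^ 2 + ((n : ℝ) - ones n) ^ 2 := by
  have h (i j : ℕ) : agreeInd 1 i j =
      (pd (i + 1) : ℝ) * pd (j + 1) + (1 - (pd (i + 1) : ℝ)) * (1 - (pd (j + 1) : ℝ)) := by
    have hA : Agree 1 i j ↔ pd (i + 1) = pd (j + 1) := by simp [Agree]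
    have hi := pd_le_one (i + 1)
    have hj := pd_le_one (j + 1)
    unfold agreeInd
    rw [hA]
    generalize pd (i + 1) = x at *
    generalize pd (j + 1) = y at *
    interval_cases x <;> interval_cases y <;> norm_num
  unfold pairCount
  simp only [h, Finset.sum_add_distrib, ← Finset.sum_mul_sum]
  simp only [Finset.sum_sub_distrib, ones]
  push_cast
  simp
  ring

lemma pairCount_two_mul_two (n : ℕ) :
    pairCount (2 * n) 2 = 2 * pairCount n 1 + 2 * (ones n : ℝ) ^ 2 := by
  have h (a b : ℕ) : agreeInd 2 (2 * a) (2 * b + 1) = (pd (a + 1) : ℝ) * pd (b + 1) := by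
    have hi := pd_le_one (a + 1)
    have hj := pd_le_one (b + 1)
    unfold agreeInd
    rw [agree_two_even_odd]
    generalize pd (a + 1) = x at *
    generalize pd (b + 1) = y at *
    interval_cases x <;> interval_cases y <;> norm_num
  rw [pairCount_split]
  simp only [h, ← Finset.sum_mul_sum, ones]
  push_cast
  ring

/-! ### Frequency of the symbol `1` -/

lemma ones_two_mul (n : ℕ) : ones (2 * n) + ones n = n := by
  unfold ones
  rw [sum_range_two_mul, ← Finset.sum_add_distrib]
  have h : ∀ a ∈ Finset.range n, pd (2 * a + 1) + pd (2 * a + 1 + 1) + pd (a + 1) = 1 := by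
    intro a _
    have h1 := pd_odd a
    have h2 := pd_even (a + 1) (by omega)
    have h3 := pd_le_one (a + 1)
    rw [show 2 * (a + 1) = 2 * a + 1 + 1 by ring] at h2
    omega
  rw [Finset.sum_congr rfl h]
  simp

lemma ones_two_mul_add_one (n : ℕ) : ones (2 * n + 1) = ones (2 * n) := by
  unfold ones
  rw [Finset.sum_range_succ, pd_odd, add_zero]

/-- The discrepancy `3 * ones n - n` changes sign under `n ↦ 2n` and drops by `1` from `2n` to
`2n+1`; hence it is logarithmic, and a square-root bound suffices here. -/
lemma ones_discrepancy (n : ℕ) : (3 * (ones n : ℤ) - n) ^ 2 ≤ 2 * n := by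
  induction n using Nat.strong_induction_on with
  | _ n ih =>
    obtain ⟨t, rfl | rfl⟩ := Nat.even_or_odd' n
    · rcases Nat.eq_zero_or_pos t with rfl | ht
      · simp [ones]
      · have h1 := ih t (by omega)
        have h2 : (ones (2 * t) : ℤ) = t - ones t := by
          have := ones_two_mul t
          omega
        rw [h2]
        push_cast
        nlinarith
    · have h1 := ih t (by omega)
      have h2 : (ones (2 * t + 1) : ℤ) = t - ones t := by
        have := ones_two_mul t
        rw [ones_two_mul_add_one]
        omega
      rw [h2]
      push_cast
      nlinarith [sq_nonneg (3 * (ones t : ℤ) - t - 1)]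

lemma ones_freq : Tendsto (fun n : ℕ => (ones n : ℝ) / n) atTop (𝓝 (1 / 3)) := by
  have hsq : Tendsto (fun n : ℕ => ((ones n : ℝ) / n - 1 / 3) ^ 2) atTop (𝓝 0) := by
    refine squeeze_zero' (Eventually.of_forall fun n => sq_nonneg _) ?_
      (tendsto_const_div_atTop_nhds_zero_nat (2 / 9))
    filter_upwards [eventually_gt_atTop 0] with n hn
    have hn' : (0 : ℝ) < n := by exact_mod_cast hn
    have h : (3 * (ones n : ℝ) - n) ^ 2 ≤ 2 * n := by exact_mod_cast ones_discrepancy n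
    have e : ((ones n : ℝ) / n - 1 / 3) ^ 2 = (3 * (ones n : ℝ) - n) ^ 2 / (9 * n ^ 2) := by
      field_simp
      ring
    rw [e, div_le_div_iff₀ (by positivity) (by positivity)]
    nlinarith
  have habs := hsq.sqrt
  simp only [Real.sqrt_sq_eq_abs, Real.sqrt_zero] at habs
  have := (tendsto_zero_iff_abs_tendsto_zero _).2 habs
  exact tendsto_sub_nhds_zero_iff.1 this

/-! ### Limits of the correlation sums -/

/-- Quadratic growth along even arguments determines the quadratic growth of a monotone
function. -/
lemma tendsto_of_even {N : ℕ → ℝ} (hN : Monotone N) {L : ℝ}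
    (h : Tendsto (fun a : ℕ => N (2 * a) / (a : ℝ) ^ 2) atTop (𝓝 (4 * L))) :
    Tendsto (fun n : ℕ => N n / (n : ℝ) ^ 2) atTop (𝓝 L) := by
  have hdiv : Tendsto (fun n : ℕ => n / 2) atTop atTop :=
    Nat.tendsto_div_const_atTop (by norm_num)
  have hinv : Tendsto (fun n : ℕ => (1 : ℝ) / n) atTop (𝓝 0) :=
    tendsto_const_div_atTop_nhds_zero_nat 1
  have hr0 : Tendsto (fun n : ℕ => ((n / 2 : ℕ) : ℝ) / n) atTop (𝓝 (1 / 2)) := by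
    have hlo : Tendsto (fun n : ℕ => (1 / 2 : ℝ) - 1 / n) atTop (𝓝 (1 / 2)) := by
      simpa only [sub_zero] using hinv.const_sub (1 / 2 : ℝ)
    refine tendsto_of_tendsto_of_tendsto_of_le_of_le' hlo tendsto_const_nhds ?_ ?_ <;>
    · filter_upwards [eventually_gt_atTop 0] with n hn
      have hn' : (0 : ℝ) < n := by exact_mod_cast hn
      have h1 : (n : ℝ) ≤ 2 * ((n / 2 : ℕ) : ℝ) + 1 := by
        exact_mod_cast (by omega : n ≤ 2 * (n / 2) + 1)
      have h2 : 2 * ((n / 2 : ℕ) : ℝ) ≤ n := by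
        exact_mod_cast (by omega : 2 * (n / 2) ≤ n)
      first
        | rw [div_le_iff₀ hn']
          linarith
        | rw [le_div_iff₀ hn', sub_mul, one_div_mul_cancel hn'.ne']
          linarith
  have hr1 : Tendsto (fun n : ℕ => ((n / 2 + 1 : ℕ) : ℝ) / n) atTop (𝓝 (1 / 2)) := by
    have := hr0.add hinv
    rw [add_zero] at this
    refine this.congr fun n => ?_
    push_cast
    ring
  have hlo := (h.comp hdiv).mul (hr0.pow 2)
  have hhi := (h.comp ((tendsto_add_atTop_nat 1).comp hdiv)).mul (hr1.pow 2)
  rw [show 4 * L * (1 / 2) ^ 2 = L by ring] at hlo hhi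
  refine tendsto_of_tendsto_of_tendsto_of_le_of_le' hlo hhi ?_ ?_
  · filter_upwards [eventually_ge_atTop 2] with n hn
    have ha : ((n / 2 : ℕ) : ℝ) ≠ 0 := by exact_mod_cast (by omega : n / 2 ≠ 0)
    have hn' : (n : ℝ) ≠ 0 := by exact_mod_cast (by omega : n ≠ 0)
    have e : N (2 * (n / 2)) / ((n / 2 : ℕ) : ℝ) ^ 2 * (((n / 2 : ℕ) : ℝ) / n) ^ 2 =
        N (2 * (n / 2)) / (n : ℝ) ^ 2 := by
      generalize ((n / 2 : ℕ) : ℝ) = x at *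
      field_simp
    simp only [Function.comp]
    rw [e]
    exact div_le_div_of_nonneg_right (hN (by omega)) (by positivity)
  · filter_upwards [eventually_ge_atTop 2] with n hn
    have ha : ((n / 2 + 1 : ℕ) : ℝ) ≠ 0 := by exact_mod_cast (by omega : n / 2 + 1 ≠ 0)
    have hn' : (n : ℝ) ≠ 0 := by exact_mod_cast (by omega : n ≠ 0)
    have e : N (2 * (n / 2 + 1)) / ((n / 2 + 1 : ℕ) : ℝ) ^ 2 *
        (((n / 2 + 1 : ℕ) : ℝ) / n) ^ 2 = N (2 * (n / 2 + 1)) / (n : ℝ) ^ 2 := by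
      generalize ((n / 2 + 1 : ℕ) : ℝ) = x at *
      field_simp
    simp only [Function.comp]
    rw [e]
    exact div_le_div_of_nonneg_right (hN (by omega)) (by positivity)

/-- The limit of the correlation sums `C(ω, n, m)` as `n → ∞`. -/
noncomputable def corrLim : ℕ → ℝ
  | 0 => 1
  | 1 => 5 / 9
  | 2 => 1 / 3
  | m + 3 => (corrLim ((m + 3) / 2) + corrLim ((m + 4) / 2)) / 4
decreasing_by all_goals omega

lemma corrLim_rec (m : ℕ) (hm : 3 ≤ m) :
    corrLim m = (corrLim (m / 2) + corrLim ((m + 1) / 2)) / 4 := by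
  obtain ⟨t, rfl⟩ := Nat.exists_eq_add_of_le' hm
  rw [corrLim]

lemma corrLim_one : corrLim 1 = 5 / 9 := by rw [corrLim]

lemma corrLim_two : corrLim 2 = 1 / 3 := by rw [corrLim]

lemma corrLim_pos (m : ℕ) : 0 < corrLim m := by
  induction m using Nat.strong_induction_on with
  | _ m ih =>
    match m, ih with
    | 0, _ => rw [corrLim]; norm_num
    | 1, _ => rw [corrLim]; norm_num
    | 2, _ => rw [corrLim]; norm_num
    | m + 3, ih =>
      rw [corrLim]
      have h1 := ih ((m + 3) / 2) (by omega)
      have h2 := ih ((m + 4) / 2) (by omega)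
      positivity

lemma corrSum_tendsto (m : ℕ) (hm : 1 ≤ m) :
    Tendsto (fun n => corrSum n m) atTop (𝓝 (corrLim m)) := by
  induction m using Nat.strong_induction_on with
  | _ m ih =>
    have h1 : Tendsto (fun n => corrSum n 1) atTop (𝓝 (5 / 9)) := by
      have := (ones_freq.pow 2).add ((ones_freq.const_sub 1).pow 2)
      rw [show (1 / 3 : ℝ) ^ 2 + (1 - 1 / 3) ^ 2 = 5 / 9 by norm_num] at this
      refine this.congr' ?_
      filter_upwards [eventually_gt_atTop 0] with n hn
      have hn' : (n : ℝ) ≠ 0 := by exact_mod_cast hn.ne'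
      rw [corrSum_eq, pairCount_one]
      field_simp
    obtain rfl | rfl | h3 : m = 1 ∨ m = 2 ∨ 3 ≤ m := by omega
    · rw [corrLim_one]
      exact h1
    · rw [corrLim_two]
      simp only [corrSum_eq] at h1 ⊢
      refine tendsto_of_even (pairCount_mono 2) ?_
      have := (h1.const_mul 2).add ((ones_freq.pow 2).const_mul 2)
      rw [show (2 : ℝ) * (5 / 9) + 2 * (1 / 3) ^ 2 = 4 * (1 / 3) by norm_num] at this
      refine this.congr fun n => ?_
      rw [pairCount_two_mul_two]
      ring
    · have ha := ih (m / 2) (by omega) (by omega)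
      have hb := ih ((m + 1) / 2) (by omega) (by omega)
      simp only [corrSum_eq] at ha hb ⊢
      refine tendsto_of_even (pairCount_mono m) ?_
      have := ha.add hb
      rw [show corrLim (m / 2) + corrLim ((m + 1) / 2) = 4 * corrLim m by
        rw [corrLim_rec m h3]; ring] at this
      refine this.congr fun n => ?_
      rw [pairCount_two_mul n m h3]
      ring

/-! ### Differences of the limits and their blocks of constancy -/

/-- The asymptotic density of pairs that agree for `m` steps but not for `m + 1` steps. -/
noncomputable def corrDiff (m : ℕ) : ℝ := corrLim m - corrLim (m + 1)

lemma corrDiff_rec (m : ℕ) (hm : 3 ≤ m) : corrDiff m = corrDiff (m / 2) / 4 := by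
  unfold corrDiff
  rw [corrLim_rec m hm, corrLim_rec (m + 1) (by omega)]
  obtain ⟨t, rfl | rfl⟩ := Nat.even_or_odd' m
  · rw [show 2 * t / 2 = t by omega, show (2 * t + 1) / 2 = t by omega,
      show (2 * t + 1 + 1) / 2 = t + 1 by omega]
    ring
  · rw [show (2 * t + 1) / 2 = t by omega, show (2 * t + 1 + 1) / 2 = t + 1 by omega,
      show (2 * t + 1 + 1 + 1) / 2 = t + 1 by omega]
    ring

lemma corrDiff_one : corrDiff 1 = 2 / 9 := by
  rw [corrDiff, corrLim_one, corrLim_two]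
  norm_num

lemma corrDiff_two : corrDiff 2 = 1 / 9 := by
  rw [corrDiff, corrLim_rec (2 + 1) (by norm_num)]
  norm_num [corrLim_one, corrLim_two]

lemma corrDiff_three : corrDiff 3 = 1 / 18 := by
  rw [corrDiff_rec 3 le_rfl]
  norm_num [corrDiff_one]

lemma corrDiff_four : corrDiff 4 = 1 / 36 := by
  rw [corrDiff_rec 4 (by norm_num)]
  norm_num [corrDiff_two]

lemma corrDiff_succ_le (m : ℕ) (hm : 1 ≤ m) : corrDiff (m + 1) ≤ corrDiff m := by
  induction m using Nat.strong_induction_on with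
  | _ m ih =>
    obtain rfl | rfl | h3 : m = 1 ∨ m = 2 ∨ 3 ≤ m := by omega
    · norm_num [corrDiff_one, corrDiff_two]
    · norm_num [corrDiff_two, corrDiff_three]
    · rw [corrDiff_rec m h3, corrDiff_rec (m + 1) (by omega)]
      obtain h | h : (m + 1) / 2 = m / 2 ∨ (m + 1) / 2 = m / 2 + 1 := by omega
      · rw [h]
      · have := ih (m / 2) (by omega) (by omega)
        rw [h]
        linarith

lemma corrDiff_anti {m M : ℕ} (hm : 1 ≤ m) (h : m ≤ M) : corrDiff M ≤ corrDiff m := by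
  induction M, h using Nat.le_induction with
  | base => exact le_rfl
  | succ n hn ih => exact (corrDiff_succ_le n (by omega)).trans ih

/-- For `m ≤ M`: `m` and `M` lie in a common block `[2^k, 2^k + 2^(k-1))` or
`[2^k + 2^(k-1), 2^(k+1))` with `k ≥ 1`. -/
def SameBlock (m M : ℕ) : Prop := ∃ k, 1 ≤ k ∧
  ((2 ^ k ≤ m ∧ M < 2 ^ k + 2 ^ (k - 1)) ∨ (2 ^ k + 2 ^ (k - 1) ≤ m ∧ M < 2 ^ (k + 1)))

lemma sameBlock_half (m M : ℕ) (hm : 4 ≤ m) (h : m ≤ M) :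
    SameBlock m M ↔ SameBlock (m / 2) (M / 2) := by
  constructor
  · rintro ⟨k, hk, H⟩
    obtain rfl | ⟨t, rfl⟩ : k = 1 ∨ ∃ t, k = t + 2 := by
      by_cases hk1 : k = 1
      · exact Or.inl hk1
      · exact Or.inr ⟨k - 2, by omega⟩
    · norm_num at H
      omega
    · refine ⟨t + 1, by omega, ?_⟩
      simp only [show t + 2 - 1 = t + 1 by omega, show t + 1 - 1 = t by omega, pow_succ] at H ⊢
      omega
  · rintro ⟨k, hk, H⟩
    obtain ⟨t, rfl⟩ := Nat.exists_eq_add_of_le' hk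
    refine ⟨t + 2, by omega, ?_⟩
    simp only [show t + 2 - 1 = t + 1 by omega, show t + 1 - 1 = t by omega, pow_succ] at H ⊢
    omega

lemma corrDiff_eq_iff (m M : ℕ) (hm : 1 ≤ m) (h : m < M) :
    corrDiff m = corrDiff M ↔ SameBlock m M := by
  -- The halving step needs the weak inequality, since `m / 2 = M / 2` may occur.
  suffices key : ∀ m M : ℕ, 2 ≤ m → m ≤ M → (corrDiff m = corrDiff M ↔ SameBlock m M) by
    obtain rfl | h2 : m = 1 ∨ 2 ≤ m := by omega
    · constructor
      · intro e
        have := corrDiff_anti (by norm_num : 1 ≤ 2) (by omega : 2 ≤ M)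
        rw [corrDiff_two] at this
        rw [corrDiff_one] at e
        linarith
      · rintro ⟨k, hk, H⟩
        have hpos : 0 < 2 ^ (k - 1) := by positivity
        have : 2 ^ 1 ≤ 2 ^ k := Nat.pow_le_pow_right (by norm_num) hk
        omega
    · exact key m M h2 h.le
  clear h hm m M
  intro m
  induction m using Nat.strong_induction_on with
  | _ m ih =>
    intro M h2 h
    by_cases h4 : 4 ≤ m
    · rw [sameBlock_half m M h4 h, ← ih (m / 2) (by omega) (M / 2) (by omega) (by omega),
        corrDiff_rec m (by omega), corrDiff_rec M (by omega)]
      constructor <;> intro e <;> linarith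
    · rcases h.eq_or_lt with rfl | hlt
      · refine iff_of_true rfl ⟨1, le_rfl, ?_⟩
        norm_num
        omega
      · refine iff_of_false ?_ ?_
        · intro e
          obtain rfl | rfl : m = 2 ∨ m = 3 := by omega
          · have := corrDiff_anti (by norm_num : 1 ≤ 3) (by omega : 3 ≤ M)
            rw [corrDiff_three] at this
            rw [corrDiff_two] at e
            linarith
          · have := corrDiff_anti (by norm_num : 1 ≤ 4) (by omega : 4 ≤ M)
            rw [corrDiff_four] at this
            rw [corrDiff_three] at e
            linarith
        · rintro ⟨k, hk, H⟩
          obtain rfl | h2k : k = 1 ∨ 2 ≤ k := by omega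
          · norm_num at H
            omega
          · have hpos : 0 < 2 ^ (k - 1) := by positivity
            have : 2 ^ 2 ≤ 2 ^ k := Nat.pow_le_pow_right (by norm_num) h2k
            omega

/-! ### Determinism -/

theorem pd_determinism_eq_one_iff (l m : ℕ) (hl : 2 ≤ l) (hm : 1 ≤ m) (RRl RR1 : ℝ)
    (hRRl : Tendsto
      (fun n => (l : ℝ) * corrSum n (m + l - 1) - ((l : ℝ) - 1) * corrSum n (m + l))
      atTop (𝓝 RRl))
    (hRR1 : Tendsto (fun n => corrSum n m) atTop (𝓝 RR1)) :
    (RRl / RR1 = 1 ↔ ∃ k, 1 ≤ k ∧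
      ((2 ^ k ≤ m ∧ m < m + l - 1 ∧ m + l - 1 < 2 ^ k + 2 ^ (k - 1)) ∨
        (2 ^ k + 2 ^ (k - 1) ≤ m ∧ m < m + l - 1 ∧ m + l - 1 < 2 ^ (k + 1)))) ∧
    (¬(∃ k, 1 ≤ k ∧
      ((2 ^ k ≤ m ∧ m < m + l - 1 ∧ m + l - 1 < 2 ^ k + 2 ^ (k - 1)) ∨
        (2 ^ k + 2 ^ (k - 1) ≤ m ∧ m < m + l - 1 ∧ m + l - 1 < 2 ^ (k + 1)))) →
      RRl / RR1 < 1) := by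
  have hL : RRl = (l : ℝ) * corrLim (m + l - 1) - ((l : ℝ) - 1) * corrLim (m + l) :=
    tendsto_nhds_unique hRRl
      (((corrSum_tendsto (m + l - 1) (by omega)).const_mul _).sub
        ((corrSum_tendsto (m + l) (by omega)).const_mul _))
  have h1 : RR1 = corrLim m := tendsto_nhds_unique hRR1 (corrSum_tendsto m hm)
  have hpos : 0 < RR1 := h1 ▸ corrLim_pos m
  obtain ⟨s, rfl⟩ : ∃ s, l = s + 1 := ⟨l - 1, by omega⟩
  have hblock : (∃ k, 1 ≤ k ∧
      ((2 ^ k ≤ m ∧ m < m + (s + 1) - 1 ∧ m + (s + 1) - 1 < 2 ^ k + 2 ^ (k - 1)) ∨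
        (2 ^ k + 2 ^ (k - 1) ≤ m ∧ m < m + (s + 1) - 1 ∧ m + (s + 1) - 1 < 2 ^ (k + 1)))) ↔
      SameBlock m (m + s) := by
    have e1 : m < m + (s + 1) - 1 := by omega
    simp only [e1, true_and]
    rfl
  have hsum : RR1 - RRl =
      ∑ j ∈ Finset.range s, (corrDiff (m + j) - corrDiff (m + s)) := by
    have htel : ∑ j ∈ Finset.range s, corrDiff (m + j) = corrLim m - corrLim (m + s) :=
      Finset.sum_range_sub' (fun j => corrLim (m + j)) s
    rw [Finset.sum_sub_distrib, htel, hL, h1, show m + (s + 1) - 1 = m + s by omega]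
    simp only [Finset.sum_const, Finset.card_range, nsmul_eq_mul, corrDiff]
    rw [← add_assoc]
    push_cast
    ring
  have hnonneg : ∀ j ∈ Finset.range s, 0 ≤ corrDiff (m + j) - corrDiff (m + s) := by
    intro j hj
    have := corrDiff_anti (m := m + j) (M := m + s) (by omega)
      (by have := Finset.mem_range.1 hj; omega)
    linarith
  rw [hblock, ← corrDiff_eq_iff m (m + s) hm (by omega)]
  have hlt : corrDiff m ≠ corrDiff (m + s) → RRl / RR1 < 1 := by
    intro hne
    have hle := corrDiff_anti hm (by omega : m ≤ m + s)
    have hge := Finset.single_le_sum hnonneg (Finset.mem_range.2 (by omega : 0 < s))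
    rw [← hsum, add_zero] at hge
    rw [div_lt_one hpos]
    have := lt_of_le_of_ne hle (Ne.symm hne)
    linarith
  refine ⟨⟨fun h => by_contra fun hne => (hlt hne).ne h, fun h => ?_⟩, hlt⟩
  have hzero : RR1 - RRl = 0 := by
    rw [hsum]
    refine Finset.sum_eq_zero fun j hj => le_antisymm ?_ (hnonneg j hj)
    have := corrDiff_anti (M := m + j) hm (by omega)
    linarith
  rw [div_eq_one_iff_eq hpos.ne']
  linarith
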